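/- No undersmoothing of the marginal maximum likelihood estimate (Cauchy slab): let α_1 be defined by d·α_1·m̃(α_1) = s_n/n for a small enough constant d > 0, and ζ_1 = ζ(α_1). Assume c_1·log²n ≤ s_n ≤ c_0·n. Then there exists a constant C > 0 such that sup_{θ ∈ ℓ0[s_n]} P_θ[ĥζ < ζ_1] ≤ exp(−C·s_n). -/

import Mathlib

/-!
Statement 10: no undersmoothing of the marginal maximum likelihood estimate,
spike and Cauchy slab prior.
-/

open MeasureTheory Real Set

noncomputable section

/-- Standard Cauchy density. -/
def cauchyDen (x : ℝ) : ℝ := (Real.pi * (1 + x ^ 2))⁻¹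


/-- Standard normal density. -/
def phi (x : ℝ) : ℝ := Real.exp (-x ^ 2 / 2) / Real.sqrt (2 * Real.pi)

/-- Standard Laplace density. -/
def lapDen (x : ℝ) : ℝ := Real.exp (-|x|) / 2

/-- Convolution `g = φ * γ`. -/
def conv (γ : ℝ → ℝ) (x : ℝ) : ℝ := ∫ u, phi (x - u) * γ u

/-- Posterior weight `a(x) = α g(x) / ((1-α) φ(x) + α g(x))`. -/
def aWt (γ : ℝ → ℝ) (α x : ℝ) : ℝ :=
  α * conv γ x / ((1 - α) * phi x + α * conv γ x)

/-- Density of the single-coordinate posterior with respect to `volume + δ₀`: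
the point mass `1 - a(x)` at `0`, and the continuous part `a(x) γ_x`. -/
def coordDen (γ : ℝ → ℝ) (α x u : ℝ) : ℝ :=
  if u = 0 then 1 - aWt γ α x else aWt γ α x * (phi (x - u) * γ u / conv γ x)

/-- Single-coordinate posterior `(1 - a(x)) δ₀ + a(x) G_x`. -/
def coordPost (γ : ℝ → ℝ) (α x : ℝ) : Measure ℝ :=
  (volume + Measure.dirac (0 : ℝ)).withDensity fun u => ENNReal.ofReal (coordDen γ α x u)

/-- The spike and slab posterior `Π_α[· | X]` on `ℝⁿ`, for a fixed weight `α`. -/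
def post (γ : ℝ → ℝ) (n : ℕ) (α : ℝ) (X : Fin n → ℝ) : Measure (Fin n → ℝ) :=
  Measure.pi fun i => coordPost γ α (X i)

/-- Law `P_θ` of the data `X`, `X_i = θ_i + ε_i` with `ε_i` i.i.d. `N(0,1)`. -/
def Pdata (n : ℕ) (θ : Fin n → ℝ) : Measure (Fin n → ℝ) :=
  Measure.pi fun i => ProbabilityTheory.gaussianReal (θ i) 1

/-- The class `ℓ₀[s]` of `s`-sparse vectors. -/
def ell0 (n s : ℕ) : Set (Fin n → ℝ) := {θ | Nat.card {i : Fin n // θ i ≠ 0} ≤ s}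

/-- Log-marginal likelihood `ℓ_n(α; X)`. -/
def logMarg (γ : ℝ → ℝ) {n : ℕ} (α : ℝ) (X : Fin n → ℝ) : ℝ :=
  ∑ i, Real.log ((1 - α) * phi (X i) + α * conv γ (X i))

/-- `0` is a median of the single-coordinate posterior distribution. -/
def medianZero (γ : ℝ → ℝ) (α x : ℝ) : Prop :=
  2⁻¹ ≤ coordPost γ α x (Set.Iic 0) ∧ 2⁻¹ ≤ coordPost γ α x (Set.Ici 0)

/-- `t` is the posterior median threshold function: for each `α ∈ (0,1)`,
`t α > 0` and the posterior median at observation `x` is `0` iff `|x| ≤ t α`. -/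
def IsThreshold (γ : ℝ → ℝ) (t : ℝ → ℝ) : Prop :=
  ∀ α ∈ Set.Ioo (0 : ℝ) 1, 0 < t α ∧ ∀ x : ℝ, (medianZero γ α x ↔ |x| ≤ t α)

/-- `hahat` is a marginal maximum likelihood empirical Bayes estimator of `α`,
with maximisation restricted to `[αn, 1]`. -/
def IsMMLE (γ : ℝ → ℝ) {n : ℕ} (αn : ℝ) (hahat : (Fin n → ℝ) → ℝ) : Prop :=
  Measurable hahat ∧ ∀ X : Fin n → ℝ, hahat X ∈ Set.Icc αn 1 ∧
    ∀ α ∈ Set.Icc αn 1, logMarg γ α X ≤ logMarg γ (hahat X) X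

/-- Expected posterior squared `L²`-moment
`E_{θ₀} ∫ ‖θ - θ₀‖² dΠ_{ĥα}(θ | X)` for the plug-in posterior. -/
def postRisk (γ : ℝ → ℝ) {n : ℕ} (hahat : (Fin n → ℝ) → ℝ) (θ0 : Fin n → ℝ) : ℝ :=
  ∫ X, (∫ θ, (∑ i, (θ i - θ0 i) ^ 2) ∂(post γ n (hahat X) X)) ∂(Pdata n θ0)

/-- `β(x) = g(x)/φ(x) - 1`. -/
def betaFn (γ : ℝ → ℝ) (x : ℝ) : ℝ := conv γ x / phi x - 1

/-- `m̃(α) = -E₀ β(X, α)`, `X ~ N(0,1)`, where `β(x,α) = β(x)/(1 + αβ(x))`. -/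
def mtilde (γ : ℝ → ℝ) (α : ℝ) : ℝ :=
  -∫ x, betaFn γ x / (1 + α * betaFn γ x) ∂(ProbabilityTheory.gaussianReal 0 1)

/-!
If `ζ(α̂) < ζ(α₁)` then `α₁ < α̂`. The log-marginal likelihood is concave in `α`, so as soon as
`α₁` lies in the range `[αₙ, 1]` over which it is maximised, the score `∑ β(Xᵢ, α₁)` is nonnegative.
This is a large deviation. Bounding `g/φ` below by `κ = g(0)/φ(0)` gives
`κ α E₀[β(X, α)²] ≤ m̃(α)`, so in a Chernoff bound at `λ = κα₁/2` each null coordinate contributes a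
factor `exp(-κ α₁ m̃(α₁) / 4)`, while `α β(x, α) ≤ 1` limits each signal to a factor `exp(κ/2)`.
With `α₁ m̃(α₁) = sₙ/(d n)` and `d` small, the null coordinates win.

It remains to see that `αₙ ≤ α₁`. On one hand `m̃ ≤ 1/κ` gives `α₁ ≥ κ sₙ/(d n)`; on the other, a
posterior median equal to zero at `x = √(2 log n)` forces `αₙ g(x) ≤ 2 φ(x) = 2 φ(0)/n`. The
comparison thus only needs `sₙ g(√(2 log n))` to be large, and `g(x) ≳ x⁻²` for the Cauchy slab.
-/

section Chernoff

open ProbabilityTheory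

lemma mgf_le_exp_of_abs_mul_le_one {Ω : Type*} {mΩ : MeasurableSpace Ω} {μ : Measure Ω}
    [IsProbabilityMeasure μ] {X : Ω → ℝ} {t : ℝ} (hX : AEMeasurable X μ)
    (htX : ∀ᵐ ω ∂μ, |t * X ω| ≤ 1) :
    mgf X μ t ≤ exp (t * ∫ ω, X ω ∂μ + t ^ 2 * ∫ ω, X ω ^ 2 ∂μ) := by
  have hbdd : ∀ᵐ ω ∂μ, t * X ω ∈ Icc (-1) 1 := htX.mono fun _ => abs_le.1
  have hLp := memLp_of_bounded hbdd (hX.const_mul t).aestronglyMeasurable 2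
  have hlin : Integrable (fun ω => 1 + t * X ω) μ :=
    (integrable_const 1).add (hLp.integrable one_le_two)
  have hexp : Integrable (fun ω => exp (t * X ω)) μ := by
    simpa only [one_mul] using integrable_exp_mul_of_mem_Icc (t := 1) (hX.const_mul t) hbdd
  calc mgf X μ t
      ≤ ∫ ω, (1 + t * X ω + (t * X ω) ^ 2) ∂μ := by
        refine integral_mono_ae hexp (hlin.add hLp.integrable_sq) (htX.mono fun ω hω => ?_)
        have hquad := (abs_le.1 (abs_exp_sub_one_sub_id_le hω)).2
        dsimp only
        linarith
    _ = t * ∫ ω, X ω ∂μ + t ^ 2 * ∫ ω, X ω ^ 2 ∂μ + 1 := by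
        rw [integral_add hlin hLp.integrable_sq,
          integral_add (integrable_const 1) (hLp.integrable one_le_two)]
        simp only [mul_pow, integral_const_mul, integral_const, probReal_univ, smul_eq_mul]
        ring
    _ ≤ _ := add_one_le_exp _

lemma pi_real_sum_nonneg_le {ι : Type*} [Fintype ι] {Ω : ι → Type*} [∀ i, MeasurableSpace (Ω i)]
    {μ : ∀ i, Measure (Ω i)} [∀ i, IsProbabilityMeasure (μ i)] {f : ∀ i, Ω i → ℝ} {t : ℝ}
    {c : ι → ℝ}
    (ht : 0 ≤ t) (hint : ∀ i, Integrable (fun x => exp (t * f i x)) (μ i))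
    (hmgf : ∀ i, mgf (f i) (μ i) t ≤ exp (c i)) :
    (Measure.pi μ).real {x | 0 ≤ ∑ i, f i (x i)} ≤ exp (∑ i, c i) := by
  have hprod : ∀ x : ∀ i, Ω i, exp (t * ∑ i, f i (x i)) = ∏ i, exp (t * f i (x i)) := fun x => by
    rw [Finset.mul_sum, exp_sum]
  calc (Measure.pi μ).real {x | 0 ≤ ∑ i, f i (x i)}
      ≤ mgf (fun x => ∑ i, f i (x i)) (Measure.pi μ) t := by
        simpa only [mul_zero, exp_zero, one_mul] using measure_ge_le_exp_mul_mgf 0 ht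
          (by simpa only [hprod] using Integrable.fintype_prod_dep hint)
    _ = ∏ i, mgf (f i) (μ i) t := by
        simp only [mgf, hprod]
        exact integral_fintype_prod_eq_prod fun i x => exp (t * f i x)
    _ ≤ ∏ i, exp (c i) := Finset.prod_le_prod (fun i _ => mgf_nonneg) fun i _ => hmgf i
    _ = exp (∑ i, c i) := (exp_sum _ _).symm

end Chernoff

section NormalDensity

open ProbabilityTheory

lemma phi_eq_gaussianPDFReal : phi = gaussianPDFReal 0 1 := by
  funext x
  simp [phi, gaussianPDFReal, div_eq_inv_mul]

lemma phi_pos (x : ℝ) : 0 < phi x := by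
  unfold phi
  positivity

lemma phi_eq_phi_zero_mul_exp (x : ℝ) : phi x = phi 0 * exp (-x ^ 2 / 2) := by
  simp [phi, div_eq_inv_mul]

lemma continuous_phi : Continuous phi := by
  unfold phi
  fun_prop

lemma integrable_phi : Integrable phi :=
  phi_eq_gaussianPDFReal ▸ integrable_gaussianPDFReal 0 1

lemma integral_phi : ∫ x, phi x = 1 :=
  phi_eq_gaussianPDFReal ▸ integral_gaussianPDFReal_eq_one 0 one_ne_zero

lemma phi_le_phi {x y : ℝ} (h : |y| ≤ |x|) : phi x ≤ phi y := by
  have := sq_le_sq.2 h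
  unfold phi
  gcongr

lemma phi_sub (x u : ℝ) : phi (x - u) = phi x * (exp (x * u) * exp (-u ^ 2 / 2)) := by
  rw [phi_eq_phi_zero_mul_exp (x - u), phi_eq_phi_zero_mul_exp x, mul_assoc, ← exp_add, ← exp_add]
  ring_nf

lemma phi_sqrt_two_mul_log {y : ℝ} (hy : 1 ≤ y) : phi √(2 * log y) = phi 0 / y := by
  rw [phi_eq_phi_zero_mul_exp, sq_sqrt (mul_nonneg zero_le_two (log_nonneg hy)), neg_div,
    mul_div_cancel_left₀ _ two_ne_zero, exp_neg, exp_log (by linarith), div_eq_mul_inv]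

end NormalDensity

section Slab

/-- `γ` is a probability density on the line: this is what the slab of the prior is required to be.
Integrability is not a field, since a function with nonzero Bochner integral is integrable. -/
structure IsDensity (γ : ℝ → ℝ) : Prop where
  nonneg : ∀ x, 0 ≤ γ x
  integral_eq_one : ∫ x, γ x = 1

variable {γ : ℝ → ℝ}

lemma IsDensity.integrable (hγ : IsDensity γ) : Integrable γ :=
  .of_integral_ne_zero (by simp [hγ.integral_eq_one])

lemma IsDensity.volume_support_pos (hγ : IsDensity γ) : 0 < volume (Function.support γ) :=
  (integral_pos_iff_support_of_nonneg hγ.nonneg hγ.integrable).1 (by simp [hγ.integral_eq_one])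

lemma integrable_phi_sub_mul (hγ : Integrable γ) (x : ℝ) :
    Integrable fun u => phi (x - u) * γ u := by
  refine hγ.bdd_mul (c := phi 0) (continuous_phi.comp (by fun_prop)).aestronglyMeasurable
    (ae_of_all _ fun u => ?_)
  rw [norm_of_nonneg (phi_pos _).le]
  exact phi_le_phi (by simp)

lemma conv_eq_convolution (γ : ℝ → ℝ) :
    conv γ = convolution γ phi (ContinuousLinearMap.mul ℝ ℝ) volume := by
  funext x
  simp [conv, convolution, mul_comm]

lemma continuous_conv (hγ : Integrable γ) : Continuous (conv γ) := by
  rw [conv_eq_convolution]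
  refine BddAbove.continuous_convolution_right_of_integrable _ ⟨phi 0, ?_⟩ hγ continuous_phi
  rintro _ ⟨x, rfl⟩
  dsimp only
  rw [norm_of_nonneg (phi_pos x).le]
  exact phi_le_phi (by simp)

lemma integrable_conv (hγ : Integrable γ) : Integrable (conv γ) :=
  conv_eq_convolution γ ▸ hγ.integrable_convolution _ integrable_phi

lemma integral_conv (hγ : Integrable γ) : ∫ x, conv γ x = ∫ x, γ x := by
  rw [conv_eq_convolution, integral_convolution _ hγ integrable_phi, integral_phi]
  simp

lemma conv_pos (hγ : IsDensity γ) (x : ℝ) : 0 < conv γ x := by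
  refine (integral_pos_iff_support_of_nonneg (fun u => mul_nonneg (phi_pos _).le (hγ.nonneg u))
    (integrable_phi_sub_mul hγ.integrable x)).2 ?_
  have hsupp : (Function.support fun u => phi (x - u)) = univ :=
    Function.support_eq_univ fun u => (phi_pos _).ne'
  rw [Function.support_mul, hsupp, univ_inter]
  exact hγ.volume_support_pos

lemma phi_one_mul_le_conv (hγ : IsDensity γ) (hanti : AntitoneOn γ (Ici 0)) {x : ℝ} (hx : 0 ≤ x) :
    phi 1 * γ (x + 1) ≤ conv γ x := by
  have hint := integrable_phi_sub_mul hγ.integrable x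
  calc phi 1 * γ (x + 1)
      = ∫ _u in Icc x (x + 1), phi 1 * γ (x + 1) := by simp
    _ ≤ ∫ u in Icc x (x + 1), phi (x - u) * γ u := by
        refine setIntegral_mono_on (integrableOn_const (by simp)) hint.integrableOn
          measurableSet_Icc fun u ⟨hxu, hux⟩ => ?_
        have hphi : phi 1 ≤ phi (x - u) :=
          phi_le_phi (by rw [abs_one, abs_le]; constructor <;> linarith)
        have hslab : γ (x + 1) ≤ γ u := hanti (hx.trans hxu) (hx.trans (hxu.trans hux)) hux
        exact mul_le_mul hphi hslab (hγ.nonneg _) (phi_pos _).le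
    _ ≤ conv γ x := setIntegral_le_integral hint
        (ae_of_all _ fun u => mul_nonneg (phi_pos _).le (hγ.nonneg u))

end Slab

section LikelihoodRatio

open ProbabilityTheory

variable {γ w : ℝ → ℝ} {x y : ℝ}

lemma exp_neg_mul_comp_neg_of_even (hw : w.Even) (x : ℝ) :
    (fun u => exp (-(x * u)) * w u) = fun u => exp (x * -u) * w (-u) := by
  funext u
  rw [hw u, mul_neg]

lemma integrable_cosh_mul_of_even (hw : w.Even) (h : Integrable fun u => exp (x * u) * w u) :
    Integrable fun u => cosh (x * u) * w u := by
  have hneg : Integrable fun u => exp (-(x * u)) * w u :=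
    exp_neg_mul_comp_neg_of_even hw x ▸ h.comp_neg
  refine ((h.add hneg).div_const 2).congr (ae_of_all _ fun u => ?_)
  simp only [cosh_eq, Pi.add_apply]
  ring

lemma integral_exp_mul_eq_integral_cosh_mul (hw : w.Even)
    (h : Integrable fun u => exp (x * u) * w u) :
    ∫ u, exp (x * u) * w u = ∫ u, cosh (x * u) * w u := by
  have hneg : Integrable fun u => exp (-(x * u)) * w u :=
    exp_neg_mul_comp_neg_of_even hw x ▸ h.comp_neg
  have hneg_eq : ∫ u, exp (-(x * u)) * w u = ∫ u, exp (x * u) * w u := by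
    rw [exp_neg_mul_comp_neg_of_even hw]
    exact integral_neg_eq_self (fun u => exp (x * u) * w u) volume
  calc ∫ u, exp (x * u) * w u
      = ((∫ u, exp (x * u) * w u) + ∫ u, exp (-(x * u)) * w u) / 2 := by rw [hneg_eq]; ring
    _ = ∫ u, (exp (x * u) * w u + exp (-(x * u)) * w u) / 2 := by
        rw [← integral_add h hneg, integral_div]
    _ = ∫ u, cosh (x * u) * w u := by
        congr 1 with u
        rw [cosh_eq]
        ring

lemma integrable_exp_mul_gaussian_mul (hγ : Integrable γ) (x : ℝ) :
    Integrable fun u => exp (x * u) * (exp (-u ^ 2 / 2) * γ u) := by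
  refine ((integrable_phi_sub_mul hγ x).div_const (phi x)).congr (ae_of_all _ fun u => ?_)
  have := (phi_pos x).ne'
  simp only [phi_sub]
  field_simp

lemma conv_div_phi_eq_integral_exp (γ : ℝ → ℝ) (x : ℝ) :
    conv γ x / phi x = ∫ u, exp (x * u) * (exp (-u ^ 2 / 2) * γ u) := by
  rw [conv, ← integral_div]
  congr 1 with u
  have := (phi_pos x).ne'
  rw [phi_sub]
  field_simp

lemma conv_div_phi_le_conv_div_phi (hγ : IsDensity γ) (heven : γ.Even) (h : |x| ≤ |y|) :
    conv γ x / phi x ≤ conv γ y / phi y := by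
  have hw : (fun u => exp (-u ^ 2 / 2) * γ u).Even := fun u => by simp only [neg_sq, heven u]
  have hint := integrable_exp_mul_gaussian_mul hγ.integrable
  simp only [conv_div_phi_eq_integral_exp, integral_exp_mul_eq_integral_cosh_mul hw (hint _)]
  refine integral_mono (integrable_cosh_mul_of_even hw (hint x))
    (integrable_cosh_mul_of_even hw (hint y)) fun u => ?_
  have hcosh : cosh (x * u) ≤ cosh (y * u) := by
    rw [cosh_le_cosh, abs_mul, abs_mul]
    gcongr
  have := hγ.nonneg u
  dsimp only
  gcongr

lemma betaFn_le_betaFn (hγ : IsDensity γ) (heven : γ.Even) (h : |x| ≤ |y|) :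
    betaFn γ x ≤ betaFn γ y :=
  sub_le_sub_right (conv_div_phi_le_conv_div_phi hγ heven h) 1

lemma lt_of_pseudoThreshold_lt (hγ : IsDensity γ) (heven : γ.Even) {ζf : ℝ → ℝ}
    (hζ : ∀ a ∈ Ioc (0 : ℝ) 1, 0 < ζf a ∧ betaFn γ (ζf a) = 1 / a) {a b : ℝ}
    (ha : a ∈ Ioc (0 : ℝ) 1) (hb : b ∈ Ioc (0 : ℝ) 1) (h : ζf a < ζf b) : b < a := by
  obtain ⟨ha_pos, ha_eq⟩ := hζ a ha
  obtain ⟨hb_pos, hb_eq⟩ := hζ b hb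
  have hinv : 1 / a ≤ 1 / b := by
    rw [← ha_eq, ← hb_eq]
    exact betaFn_le_betaFn hγ heven (by rw [abs_of_pos ha_pos, abs_of_pos hb_pos]; exact h.le)
  refine ((one_div_le_one_div ha.1 hb.1).1 hinv).lt_of_ne ?_
  rintro rfl
  exact h.false

lemma continuous_betaFn (hγ : Integrable γ) : Continuous (betaFn γ) :=
  ((continuous_conv hγ).div continuous_phi fun x => (phi_pos x).ne').sub continuous_const

lemma phi_mul_betaFn (γ : ℝ → ℝ) (x : ℝ) : phi x * betaFn γ x = conv γ x - phi x := by
  rw [betaFn, mul_sub_one, mul_div_cancel₀ _ (phi_pos x).ne']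

lemma integrable_betaFn (hγ : Integrable γ) : Integrable (betaFn γ) (gaussianReal 0 1) := by
  rw [gaussianReal_of_var_ne_zero _ one_ne_zero,
    integrable_withDensity_iff_integrable_smul' (measurable_gaussianPDF _ _)
      (ae_of_all _ fun x => gaussianPDF_lt_top)]
  simp only [toReal_gaussianPDF, ← phi_eq_gaussianPDFReal, smul_eq_mul, phi_mul_betaFn]
  exact (integrable_conv hγ).sub integrable_phi

lemma integral_betaFn (hγ : IsDensity γ) : ∫ x, betaFn γ x ∂(gaussianReal 0 1) = 0 := by
  simp only [integral_gaussianReal_eq_integral_smul one_ne_zero, ← phi_eq_gaussianPDFReal,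
    smul_eq_mul, phi_mul_betaFn]
  rw [integral_sub (integrable_conv hγ.integrable) integrable_phi, integral_conv hγ.integrable,
    integral_phi, hγ.integral_eq_one, sub_self]

/-- `κ = g(0)/φ(0)`, the minimum of the likelihood ratio `g/φ = 1 + β` for an even slab. -/
def minRatio (γ : ℝ → ℝ) : ℝ := conv γ 0 / phi 0

lemma minRatio_pos (hγ : IsDensity γ) : 0 < minRatio γ :=
  div_pos (conv_pos hγ 0) (phi_pos 0)

lemma minRatio_le_one (hγ : IsDensity γ) : minRatio γ ≤ 1 := by
  have hint := integrable_exp_mul_gaussian_mul hγ.integrable 0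
  rw [minRatio, conv_div_phi_eq_integral_exp, ← hγ.integral_eq_one]
  refine integral_mono hint hγ.integrable fun u => ?_
  have hexp : exp (-u ^ 2 / 2) ≤ 1 := exp_le_one_iff.2 (by linarith [sq_nonneg u])
  simpa only [zero_mul, exp_zero, one_mul] using mul_le_of_le_one_left (hγ.nonneg u) hexp

lemma minRatio_le_one_add_betaFn (hγ : IsDensity γ) (heven : γ.Even) (x : ℝ) :
    minRatio γ ≤ 1 + betaFn γ x := by
  rw [betaFn, add_sub_cancel]
  exact conv_div_phi_le_conv_div_phi hγ heven (by simp)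

lemma minRatio_le_one_add_mul_betaFn (hγ : IsDensity γ) (heven : γ.Even) {α : ℝ}
    (hα : α ∈ Icc (0 : ℝ) 1) (x : ℝ) : minRatio γ ≤ 1 + α * betaFn γ x := by
  have hβ := mul_le_mul_of_nonneg_left (minRatio_le_one_add_betaFn hγ heven x) hα.1
  have hone := mul_le_mul_of_nonneg_left (minRatio_le_one hγ) (sub_nonneg.2 hα.2)
  linarith

end LikelihoodRatio

section Score

open ProbabilityTheory

variable {γ : ℝ → ℝ} {α : ℝ}

/-- `β(x, α) = β(x) / (1 + αβ(x))`, the derivative in `α` of the log-marginal likelihood of a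
single observation `x`. -/
def score (γ : ℝ → ℝ) (α x : ℝ) : ℝ := betaFn γ x / (1 + α * betaFn γ x)

lemma score_mul_one_add_mul_betaFn (hγ : IsDensity γ) (heven : γ.Even) (hα : α ∈ Icc (0 : ℝ) 1)
    (x : ℝ) : score γ α x * (1 + α * betaFn γ x) = betaFn γ x :=
  div_mul_cancel₀ _ ((minRatio_pos hγ).trans_le (minRatio_le_one_add_mul_betaFn hγ heven hα x)).ne'

lemma mul_score_le_one (hγ : IsDensity γ) (heven : γ.Even) (hα : α ∈ Icc (0 : ℝ) 1) (x : ℝ) :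
    α * score γ α x ≤ 1 := by
  have hden := (minRatio_pos hγ).trans_le (minRatio_le_one_add_mul_betaFn hγ heven hα x)
  rw [score, mul_div_assoc', div_le_one hden]
  linarith

lemma neg_one_le_minRatio_mul_score (hγ : IsDensity γ) (heven : γ.Even) (hα : α ∈ Icc (0 : ℝ) 1)
    (x : ℝ) : -1 ≤ minRatio γ * score γ α x := by
  have hden := minRatio_le_one_add_mul_betaFn hγ heven hα x
  have hκ := minRatio_pos hγ
  rw [score, mul_div_assoc', le_div_iff₀ (hκ.trans_le hden)]
  have hβ := mul_le_mul_of_nonneg_left (minRatio_le_one_add_betaFn hγ heven x) hκ.le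
  linarith [minRatio_le_one hγ, mul_nonneg hκ.le hκ.le]

lemma score_mem_Icc (hγ : IsDensity γ) (heven : γ.Even) (hα : α ∈ Ioc (0 : ℝ) 1) (x : ℝ) :
    score γ α x ∈ Icc (-1 / minRatio γ) (1 / α) := by
  have hα' := Ioc_subset_Icc_self hα
  rw [mem_Icc, div_le_iff₀' (minRatio_pos hγ), le_div_iff₀' hα.1]
  exact ⟨neg_one_le_minRatio_mul_score hγ heven hα' x, mul_score_le_one hγ heven hα' x⟩

lemma continuous_score (hγ : IsDensity γ) (heven : γ.Even) (hα : α ∈ Icc (0 : ℝ) 1) :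
    Continuous (score γ α) := by
  have hβ := continuous_betaFn hγ.integrable
  exact hβ.div (continuous_const.add (continuous_const.mul hβ)) fun x =>
    ((minRatio_pos hγ).trans_le (minRatio_le_one_add_mul_betaFn hγ heven hα x)).ne'

lemma minRatio_mul_sq_score_le (hγ : IsDensity γ) (heven : γ.Even) (hα : α ∈ Icc (0 : ℝ) 1)
    (x : ℝ) : minRatio γ * (α * score γ α x ^ 2) ≤ betaFn γ x - score γ α x :=
  calc minRatio γ * (α * score γ α x ^ 2)
      ≤ (1 + α * betaFn γ x) * (α * score γ α x ^ 2) :=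
        mul_le_mul_of_nonneg_right (minRatio_le_one_add_mul_betaFn hγ heven hα x)
          (mul_nonneg hα.1 (sq_nonneg _))
    _ = betaFn γ x - score γ α x := by
        linear_combination (1 + α * score γ α x) * score_mul_one_add_mul_betaFn hγ heven hα x

lemma integrable_score (hγ : IsDensity γ) (heven : γ.Even) (hα : α ∈ Ioc (0 : ℝ) 1)
    (μ : Measure ℝ) [IsFiniteMeasure μ] : Integrable (score γ α) μ :=
  .of_mem_Icc _ _ (continuous_score hγ heven (Ioc_subset_Icc_self hα)).aemeasurable
    (ae_of_all _ (score_mem_Icc hγ heven hα))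

lemma integrable_exp_mul_score (hγ : IsDensity γ) (heven : γ.Even) (hα : α ∈ Ioc (0 : ℝ) 1)
    (t : ℝ) (μ : Measure ℝ) [IsFiniteMeasure μ] :
    Integrable (fun x => exp (t * score γ α x)) μ :=
  integrable_exp_mul_of_mem_Icc
    (continuous_score hγ heven (Ioc_subset_Icc_self hα)).aemeasurable
    (ae_of_all _ (score_mem_Icc hγ heven hα))

lemma minRatio_mul_mtilde_le_one (hγ : IsDensity γ) (heven : γ.Even) (hα : α ∈ Ioc (0 : ℝ) 1) :
    minRatio γ * mtilde γ α ≤ 1 := by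
  have hmean : ∫ _x, (-1 : ℝ) ∂(gaussianReal 0 1)
      ≤ ∫ x, minRatio γ * score γ α x ∂(gaussianReal 0 1) :=
    integral_mono (integrable_const _) ((integrable_score hγ heven hα _).const_mul _)
      (neg_one_le_minRatio_mul_score hγ heven (Ioc_subset_Icc_self hα))
  have hm : mtilde γ α = -∫ x, score γ α x ∂(gaussianReal 0 1) := rfl
  rw [integral_const_mul, integral_const, probReal_univ, one_smul] at hmean
  rw [hm]
  linarith

lemma minRatio_mul_integral_sq_score_le_mtilde (hγ : IsDensity γ) (heven : γ.Even)
    (hα : α ∈ Ioc (0 : ℝ) 1) :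
    minRatio γ * (α * ∫ x, score γ α x ^ 2 ∂(gaussianReal 0 1)) ≤ mtilde γ α := by
  have hα' := Ioc_subset_Icc_self hα
  have hscore := integrable_score hγ heven hα (gaussianReal 0 1)
  have hβ := integrable_betaFn hγ.integrable
  have hsq : Integrable (fun x => score γ α x ^ 2) (gaussianReal 0 1) :=
    (memLp_of_bounded (ae_of_all _ (score_mem_Icc hγ heven hα))
      hscore.aestronglyMeasurable 2).integrable_sq
  calc minRatio γ * (α * ∫ x, score γ α x ^ 2 ∂(gaussianReal 0 1))
      = ∫ x, minRatio γ * (α * score γ α x ^ 2) ∂(gaussianReal 0 1) := by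
        rw [integral_const_mul, integral_const_mul]
    _ ≤ ∫ x, (betaFn γ x - score γ α x) ∂(gaussianReal 0 1) :=
        integral_mono ((hsq.const_mul α).const_mul _) (hβ.sub hscore)
          (minRatio_mul_sq_score_le hγ heven hα')
    _ = mtilde γ α := by
        rw [integral_sub hβ hscore, integral_betaFn hγ, zero_sub]
        rfl

lemma mtilde_nonneg (hγ : IsDensity γ) (heven : γ.Even) (hα : α ∈ Ioc (0 : ℝ) 1) :
    0 ≤ mtilde γ α :=
  (mul_nonneg (minRatio_pos hγ).le
    (mul_nonneg hα.1.le (integral_nonneg fun _ => sq_nonneg _))).trans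
      (minRatio_mul_integral_sq_score_le_mtilde hγ heven hα)

lemma mgf_score_null_le (hγ : IsDensity γ) (heven : γ.Even) (hα : α ∈ Ioc (0 : ℝ) 1) :
    mgf (score γ α) (gaussianReal 0 1) (minRatio γ / 2 * α)
      ≤ exp (-(minRatio γ / 4 * α * mtilde γ α)) := by
  have hα' := Ioc_subset_Icc_self hα
  have hκ := minRatio_pos hγ
  have hbdd : ∀ x, |minRatio γ / 2 * α * score γ α x| ≤ 1 := fun x => by
    have hupper := mul_le_mul_of_nonneg_left (mul_score_le_one hγ heven hα' x) hκ.le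
    have hlower := mul_le_mul_of_nonneg_left (neg_one_le_minRatio_mul_score hγ heven hα' x) hα.1.le
    rw [abs_le]
    constructor <;> linarith [minRatio_le_one hγ, hα.2]
  refine (mgf_le_exp_of_abs_mul_le_one (continuous_score hγ heven hα').aemeasurable
    (ae_of_all _ hbdd)).trans
    (exp_le_exp.2 ?_)
  have hm : ∫ x, score γ α x ∂(gaussianReal 0 1) = -mtilde γ α := (neg_neg _).symm
  have hsq := mul_le_mul_of_nonneg_left (minRatio_mul_integral_sq_score_le_mtilde hγ heven hα)
    (mul_nonneg (div_nonneg hκ.le zero_le_four) hα.1.le)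
  rw [hm]
  linarith

lemma mgf_score_le (hγ : IsDensity γ) (heven : γ.Even) (hα : α ∈ Ioc (0 : ℝ) 1)
    (μ : Measure ℝ) [IsProbabilityMeasure μ] :
    mgf (score γ α) μ (minRatio γ / 2 * α) ≤ exp (minRatio γ / 2) := by
  have hexp : ∀ x, exp (minRatio γ / 2 * α * score γ α x) ≤ exp (minRatio γ / 2) := fun x => by
    rw [exp_le_exp, mul_assoc]
    exact mul_le_of_le_one_right (div_nonneg (minRatio_pos hγ).le zero_le_two)
      (mul_score_le_one hγ heven (Ioc_subset_Icc_self hα) x)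
  calc mgf (score γ α) μ (minRatio γ / 2 * α)
      ≤ ∫ _x, exp (minRatio γ / 2) ∂μ :=
        integral_mono (integrable_exp_mul_score hγ heven hα _ μ) (integrable_const _) hexp
    _ = exp (minRatio γ / 2) := by rw [integral_const, probReal_univ, one_smul]

end Score

section SparseData

variable {γ : ℝ → ℝ} {α : ℝ} {n s : ℕ} {θ : Fin n → ℝ}

instance instIsProbabilityMeasurePdata (n : ℕ) (θ : Fin n → ℝ) :
    IsProbabilityMeasure (Pdata n θ) := by
  unfold Pdata
  infer_instance

lemma sum_ite_eq_zero_le_of_mem_ell0 (hθ : θ ∈ ell0 n s) {a b : ℝ} (hba : b ≤ a) :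
    ∑ i, (if θ i = 0 then b else a) ≤ a * s + b * (n - s) := by
  have hcard : (Finset.card {i | θ i ≠ 0} : ℝ) ≤ s := by
    rw [← Fintype.card_subtype, ← Nat.card_eq_fintype_card]
    exact_mod_cast hθ
  calc ∑ i, (if θ i = 0 then b else a)
      = ∑ i, (b + if θ i ≠ 0 then a - b else 0) := by
        refine Finset.sum_congr rfl fun i _ => ?_
        split_ifs <;> simp_all
    _ = n * b + Finset.card {i | θ i ≠ 0} * (a - b) := by
        rw [Finset.sum_add_distrib, ← Finset.sum_filter, Finset.sum_const, Finset.sum_const,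
          Finset.card_fin, nsmul_eq_mul, nsmul_eq_mul]
    _ ≤ n * b + s * (a - b) := by gcongr
    _ = a * s + b * (n - s) := by ring

lemma Pdata_real_sum_score_nonneg_le (hγ : IsDensity γ) (heven : γ.Even)
    (hα : α ∈ Ioc (0 : ℝ) 1) (hθ : θ ∈ ell0 n s) :
    (Pdata n θ).real {X | 0 ≤ ∑ i, score γ α (X i)}
      ≤ exp (minRatio γ / 2 * s - minRatio γ / 4 * (α * mtilde γ α) * (n - s)) := by
  have hκ := minRatio_pos hγ
  have hdrift : 0 ≤ minRatio γ / 4 * α * mtilde γ α :=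
    mul_nonneg (mul_nonneg (by positivity) hα.1.le) (mtilde_nonneg hγ heven hα)
  refine (pi_real_sum_nonneg_le
    (c := fun i => if θ i = 0 then -(minRatio γ / 4 * α * mtilde γ α) else minRatio γ / 2)
    (mul_nonneg (half_pos hκ).le hα.1.le)
    (fun i => integrable_exp_mul_score hγ heven hα _ _) fun i => ?_).trans (exp_le_exp.2 ?_)
  · split_ifs with hi
    · exact hi ▸ mgf_score_null_le hγ heven hα
    · exact mgf_score_le hγ heven hα _
  · linarith [sum_ite_eq_zero_le_of_mem_ell0 hθ (by linarith :
      -(minRatio γ / 4 * α * mtilde γ α) ≤ minRatio γ / 2)]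

lemma div_mul_le_mul_sub_of_mul_eq_div {c d m n s : ℝ} (hd : 0 < d) (hn : 0 < n) (hs : 0 ≤ s)
    (hsn : s ≤ c * n) (hm : d * m = s / n) : (1 - c) / d * s ≤ m * (n - s) := by
  obtain rfl : m = s / n / d := by rw [eq_div_iff hd.ne', ← hm, mul_comm]
  calc (1 - c) / d * s = s / n / d * (n - c * n) := by field_simp
    _ ≤ s / n / d * (n - s) := by gcongr

lemma Pdata_real_sum_score_nonneg_le_exp_neg (hγ : IsDensity γ) (heven : γ.Even)
    (hα : α ∈ Ioc (0 : ℝ) 1) (hθ : θ ∈ ell0 n s) {c d : ℝ} (hd : 0 < d) (hn : 1 ≤ n)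
    (hsn : (s : ℝ) ≤ c * n) (hα_eq : d * α * mtilde γ α = s / n) :
    (Pdata n θ).real {X | 0 ≤ ∑ i, score γ α (X i)}
      ≤ exp (-(minRatio γ / 4 * ((1 - c) / d - 2)) * s) := by
  refine (Pdata_real_sum_score_nonneg_le hγ heven hα hθ).trans (exp_le_exp.2 ?_)
  have hnull : (1 - c) / d * s ≤ α * mtilde γ α * (n - s) :=
    div_mul_le_mul_sub_of_mul_eq_div hd (by exact_mod_cast hn) s.cast_nonneg hsn
      (by rw [← mul_assoc, hα_eq])
  have := mul_le_mul_of_nonneg_left hnull (div_pos (minRatio_pos hγ) four_pos).le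
  linarith

end SparseData

section MarginalLikelihood

variable {γ : ℝ → ℝ} {n : ℕ} {a b : ℝ}

lemma mixture_eq_phi_mul (γ : ℝ → ℝ) (c x : ℝ) :
    (1 - c) * phi x + c * conv γ x = phi x * (1 + c * betaFn γ x) := by
  linear_combination -c * phi_mul_betaFn γ x

lemma log_mixture_sub_le (hγ : IsDensity γ) (heven : γ.Even) (ha : a ∈ Icc (0 : ℝ) 1)
    (hb : b ∈ Icc (0 : ℝ) 1) (x : ℝ) :
    log ((1 - b) * phi x + b * conv γ x) - log ((1 - a) * phi x + a * conv γ x)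
      ≤ (b - a) * score γ a x := by
  have hφ := (phi_pos x).ne'
  have hda := (minRatio_pos hγ).trans_le (minRatio_le_one_add_mul_betaFn hγ heven ha x)
  have hdb := (minRatio_pos hγ).trans_le (minRatio_le_one_add_mul_betaFn hγ heven hb x)
  calc log ((1 - b) * phi x + b * conv γ x) - log ((1 - a) * phi x + a * conv γ x)
      = log ((1 + b * betaFn γ x) / (1 + a * betaFn γ x)) := by
        rw [mixture_eq_phi_mul, mixture_eq_phi_mul, log_mul hφ hdb.ne', log_mul hφ hda.ne',
          log_div hdb.ne' hda.ne', add_sub_add_left_eq_sub]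
    _ ≤ (1 + b * betaFn γ x) / (1 + a * betaFn γ x) - 1 :=
        log_le_sub_one_of_pos (div_pos hdb hda)
    _ = (b - a) * score γ a x := by
        rw [score, div_sub_one hda.ne', mul_div_assoc']
        ring

lemma logMarg_sub_le (hγ : IsDensity γ) (heven : γ.Even) (ha : a ∈ Icc (0 : ℝ) 1)
    (hb : b ∈ Icc (0 : ℝ) 1) (X : Fin n → ℝ) :
    logMarg γ b X - logMarg γ a X ≤ (b - a) * ∑ i, score γ a (X i) := by
  rw [logMarg, logMarg, ← Finset.sum_sub_distrib, Finset.mul_sum]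
  exact Finset.sum_le_sum fun i _ => log_mixture_sub_le hγ heven ha hb (X i)

lemma sum_score_nonneg_of_lt_mmle (hγ : IsDensity γ) (heven : γ.Even) {αn : ℝ} (hαn : 0 ≤ αn)
    {hahat : (Fin n → ℝ) → ℝ} (hmmle : IsMMLE γ αn hahat) (ha : a ∈ Icc αn 1) {X : Fin n → ℝ}
    (hlt : a < hahat X) : 0 ≤ ∑ i, score γ a (X i) := by
  obtain ⟨hmem, hmax⟩ := hmmle.2 X
  have hIcc : Icc αn 1 ⊆ Icc 0 1 := Icc_subset_Icc_left hαn
  have hnonneg : 0 ≤ (hahat X - a) * ∑ i, score γ a (X i) :=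
    (sub_nonneg.2 (hmax a ha)).trans (logMarg_sub_le hγ heven (hIcc ha) (hIcc hmem) X)
  exact nonneg_of_mul_nonneg_right hnonneg (sub_pos.2 hlt)

lemma setOf_pseudoThreshold_mmle_lt_subset (hγ : IsDensity γ) (heven : γ.Even) {ζf : ℝ → ℝ}
    (hζ : ∀ c ∈ Ioc (0 : ℝ) 1, 0 < ζf c ∧ betaFn γ (ζf c) = 1 / c) {αn : ℝ} (hαn : 0 < αn)
    {hahat : (Fin n → ℝ) → ℝ} (hmmle : IsMMLE γ αn hahat) (ha : a ∈ Icc αn 1) :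
    {X | ζf (hahat X) < ζf a} ⊆ {X | 0 ≤ ∑ i, score γ a (X i)} := fun X hX =>
  have hIcc : Icc αn 1 ⊆ Ioc 0 1 := fun _ hc => ⟨hαn.trans_le hc.1, hc.2⟩
  sum_score_nonneg_of_lt_mmle hγ heven hαn.le hmmle ha
    (lt_of_pseudoThreshold_lt hγ heven hζ (hIcc (hmmle.2 X).1) (hIcc ha) hX)

end MarginalLikelihood

section PosteriorMedian

variable {γ : ℝ → ℝ} {α x : ℝ}

lemma IsThreshold.medianZero {t : ℝ → ℝ} (ht : IsThreshold γ t) (hα : α ∈ Ioo (0 : ℝ) 1) :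
    medianZero γ α (t α) :=
  ((ht α hα).2 _).2 (abs_of_pos (ht α hα).1).le

lemma mixture_pos (hγ : IsDensity γ) (hα : α ∈ Icc (0 : ℝ) 1) (x : ℝ) :
    0 < (1 - α) * phi x + α * conv γ x := by
  have hmin : 0 < min (phi x) (conv γ x) := lt_min (phi_pos x) (conv_pos hγ x)
  have hφ := mul_le_mul_of_nonneg_left (min_le_left (phi x) (conv γ x)) (sub_nonneg.2 hα.2)
  have hg := mul_le_mul_of_nonneg_left (min_le_right (phi x) (conv γ x)) hα.1
  linarith

lemma aWt_mem_Icc (hγ : IsDensity γ) (hα : α ∈ Icc (0 : ℝ) 1) (x : ℝ) :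
    aWt γ α x ∈ Icc (0 : ℝ) 1 := by
  have hslab := mul_nonneg hα.1 (conv_pos hγ x).le
  have hspike := mul_nonneg (sub_nonneg.2 hα.2) (phi_pos x).le
  exact ⟨div_nonneg hslab (mixture_pos hγ hα x).le,
    (div_le_one (mixture_pos hγ hα x)).2 (by linarith)⟩

lemma coordPost_Iic_zero (γ : ℝ → ℝ) (α x : ℝ) :
    coordPost γ α x (Iic 0) = ENNReal.ofReal (1 - aWt γ α x) +
      ∫⁻ u in Iic 0, ENNReal.ofReal (aWt γ α x * (phi (x - u) * γ u / conv γ x)) := by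
  rw [coordPost, withDensity_apply _ measurableSet_Iic, Measure.restrict_add,
    lintegral_add_measure, setLIntegral_dirac, if_pos (by simp), add_comm]
  congr 1
  · simp [coordDen]
  · refine lintegral_congr_ae ?_
    filter_upwards [ae_restrict_of_ae (Measure.ae_ne volume (0 : ℝ))] with u hu
    rw [coordDen, if_neg hu]

lemma setIntegral_Iic_zero_phi_sub_mul_le (hγ : IsDensity γ) (hx : 0 ≤ x) :
    ∫ u in Iic 0, phi (x - u) * γ u ≤ phi x :=
  calc ∫ u in Iic 0, phi (x - u) * γ u
      ≤ ∫ u in Iic 0, phi x * γ u := by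
        refine setIntegral_mono_on (integrable_phi_sub_mul hγ.integrable x).integrableOn
          (hγ.integrable.const_mul _).integrableOn measurableSet_Iic fun u hu => ?_
        refine mul_le_mul_of_nonneg_right (phi_le_phi ?_) (hγ.nonneg u)
        rw [mem_Iic] at hu
        rw [abs_of_nonneg hx, abs_of_nonneg (by linarith)]
        linarith
    _ ≤ ∫ u, phi x * γ u := setIntegral_le_integral (hγ.integrable.const_mul _)
        (ae_of_all _ fun u => mul_nonneg (phi_pos x).le (hγ.nonneg u))
    _ = phi x := by rw [integral_const_mul, hγ.integral_eq_one, mul_one]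

lemma coordPost_Iic_zero_le (hγ : IsDensity γ) (hα : α ∈ Icc (0 : ℝ) 1) (hx : 0 ≤ x) :
    coordPost γ α x (Iic 0) ≤
      ENNReal.ofReal (phi x / ((1 - α) * phi x + α * conv γ x)) := by
  obtain ⟨ha0, ha1⟩ := aWt_mem_Icc hγ hα x
  have hg := conv_pos hγ x
  have hmix := (mixture_pos hγ hα x).ne'
  have hint : Integrable fun u => aWt γ α x * (phi (x - u) * γ u / conv γ x) :=
    ((integrable_phi_sub_mul hγ.integrable x).div_const _).const_mul _
  have hnonneg : ∀ u, 0 ≤ aWt γ α x * (phi (x - u) * γ u / conv γ x) := fun u =>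
    mul_nonneg ha0 (div_nonneg (mul_nonneg (phi_pos _).le (hγ.nonneg u)) hg.le)
  rw [coordPost_Iic_zero, ← ofReal_integral_eq_lintegral_ofReal hint.integrableOn
    (ae_of_all _ hnonneg), ← ENNReal.ofReal_add (sub_nonneg.2 ha1) (integral_nonneg hnonneg),
    integral_const_mul, integral_div]
  apply ENNReal.ofReal_le_ofReal
  calc 1 - aWt γ α x + aWt γ α x * ((∫ u in Iic 0, phi (x - u) * γ u) / conv γ x)
      ≤ 1 - aWt γ α x + aWt γ α x * (phi x / conv γ x) := by
        gcongr
        exact setIntegral_Iic_zero_phi_sub_mul_le hγ hx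
    _ = phi x / ((1 - α) * phi x + α * conv γ x) := by
        rw [aWt]
        field_simp
        ring

lemma mul_conv_le_two_mul_phi_of_medianZero (hγ : IsDensity γ) (hα : α ∈ Icc (0 : ℝ) 1)
    (hx : 0 ≤ x) (hmed : medianZero γ α x) : α * conv γ x ≤ 2 * phi x := by
  have hφ := phi_pos x
  have hmix := mixture_pos hγ hα x
  have hhalf : ENNReal.ofReal 2⁻¹ ≤
      ENNReal.ofReal (phi x / ((1 - α) * phi x + α * conv γ x)) := by
    rw [ENNReal.ofReal_inv_of_pos two_pos, ENNReal.ofReal_ofNat]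
    exact hmed.1.trans (coordPost_Iic_zero_le hγ hα hx)
  rw [ENNReal.ofReal_le_ofReal_iff (by positivity), le_div_iff₀ hmix] at hhalf
  linarith [mul_nonneg (sub_nonneg.2 hα.2) hφ.le]

lemma le_of_medianZero_of_le_mul_conv (hγ : IsDensity γ) (heven : γ.Even) {n s : ℕ} (hn : 1 ≤ n)
    {d αn α1 : ℝ} (hd : 0 < d) (hαn : αn ∈ Icc (0 : ℝ) 1) (hα1 : α1 ∈ Ioc (0 : ℝ) 1)
    (hmed : medianZero γ αn √(2 * log n)) (hα1_eq : d * α1 * mtilde γ α1 = s / n)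
    (hs : 2 * d * phi 0 / minRatio γ ≤ s * conv γ √(2 * log n)) : αn ≤ α1 := by
  have hg := conv_pos hγ √(2 * log n)
  have hκ := minRatio_pos hγ
  have hn' : (1 : ℝ) ≤ n := by exact_mod_cast hn
  rw [div_le_iff₀' hκ] at hs
  have hαn_le : αn * conv γ √(2 * log n) ≤ 2 * (phi 0 / n) := by
    rw [← phi_sqrt_two_mul_log hn']
    exact mul_conv_le_two_mul_phi_of_medianZero hγ hαn (sqrt_nonneg _) hmed
  have hα1_ge : d * (2 * (phi 0 / n)) ≤ d * (α1 * conv γ √(2 * log n)) :=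
    calc d * (2 * (phi 0 / n))
        = 2 * d * phi 0 / n := by ring
      _ ≤ minRatio γ * (s * conv γ √(2 * log n)) / n := by gcongr
      _ = minRatio γ * mtilde γ α1 * (d * (α1 * conv γ √(2 * log n))) := by
        linear_combination -(minRatio γ * conv γ √(2 * log n)) * hα1_eq
      _ ≤ d * (α1 * conv γ √(2 * log n)) := by
        refine mul_le_of_le_one_left ?_ (minRatio_mul_mtilde_le_one hγ heven hα1)
        exact mul_nonneg hd.le (mul_nonneg hα1.1.le hg.le)
  exact le_of_mul_le_mul_right (hαn_le.trans (le_of_mul_le_mul_left hα1_ge hd)) hg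

end PosteriorMedian

section CauchySlab

lemma isDensity_cauchyDen : IsDensity cauchyDen where
  nonneg x := by
    unfold cauchyDen
    positivity
  integral_eq_one := by
    simp only [cauchyDen, mul_inv]
    rw [integral_const_mul, integral_univ_inv_one_add_sq, inv_mul_cancel₀ pi_ne_zero]

lemma even_cauchyDen : cauchyDen.Even := fun x => by
  rw [cauchyDen, cauchyDen, neg_sq]

lemma antitoneOn_cauchyDen : AntitoneOn cauchyDen (Ici 0) := fun x hx y _ hxy => by
  rw [mem_Ici] at hx
  unfold cauchyDen
  gcongr

lemma phi_one_div_le_mul_conv_cauchyDen {L : ℝ} (hL : 1 ≤ L) :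
    phi 1 / (7 * π) ≤ L * conv cauchyDen √(2 * L) := by
  have hφ := phi_pos 1
  have hx := sqrt_nonneg (2 * L)
  have hx_sq : √(2 * L) ^ 2 = 2 * L := sq_sqrt (by linarith)
  have hquad : 1 + (√(2 * L) + 1) ^ 2 ≤ 7 * L := by
    linarith [sq_nonneg (√(2 * L) - 1)]
  calc phi 1 / (7 * π)
      = L * (phi 1 * (π * (7 * L))⁻¹) := by field_simp
    _ ≤ L * (phi 1 * cauchyDen (√(2 * L) + 1)) := by
        unfold cauchyDen
        gcongr
    _ ≤ L * conv cauchyDen √(2 * L) := by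
        gcongr
        exact phi_one_mul_le_conv isDensity_cauchyDen antitoneOn_cauchyDen hx

lemma mul_phi_one_div_le_mul_conv_cauchyDen {n : ℕ} (hn : 3 ≤ n) {c s : ℝ} (hc : 0 ≤ c)
    (hs : c * log n ^ 2 ≤ s) :
    c * (phi 1 / (7 * π)) ≤ s * conv cauchyDen √(2 * log n) := by
  have hn' : (3 : ℝ) ≤ n := by exact_mod_cast hn
  have hlog : 1 ≤ log n := (le_log_iff_exp_le (by linarith)).2 (exp_one_lt_three.le.trans hn')
  have hg := (conv_pos isDensity_cauchyDen √(2 * log n)).le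
  calc c * (phi 1 / (7 * π))
      ≤ c * (log n * conv cauchyDen √(2 * log n)) := by
        gcongr
        exact phi_one_div_le_mul_conv_cauchyDen hlog
    _ ≤ c * (log n ^ 2 * conv cauchyDen √(2 * log n)) := by
        gcongr
        exact le_self_pow₀ hlog two_ne_zero
    _ ≤ s * conv cauchyDen √(2 * log n) := by
        rw [← mul_assoc]
        exact mul_le_mul_of_nonneg_right hs hg

end CauchySlab

theorem no_undersmoothing_general {γ : ℝ → ℝ} (hγ : IsDensity γ) (heven : γ.Even) {d c0 : ℝ}
    (hd : 0 < d) (hdc : 2 * d + c0 < 1) :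
    ∃ c1 > (0 : ℝ), ∃ C > (0 : ℝ), ∀ n s : ℕ,
      c1 ≤ s * conv γ √(2 * log n) → (s : ℝ) ≤ c0 * n →
        ∀ ζf : ℝ → ℝ, (∀ a ∈ Ioc (0 : ℝ) 1, 0 < ζf a ∧ betaFn γ (ζf a) = 1 / a) →
        ∀ αn ∈ Ioc (0 : ℝ) 1, medianZero γ αn √(2 * log n) →
        ∀ hahat : (Fin n → ℝ) → ℝ, IsMMLE γ αn hahat →
        ∀ α1 ∈ Ioc (0 : ℝ) 1, d * α1 * mtilde γ α1 = s / n →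
        ∀ θ ∈ ell0 n s,
          Pdata n θ {X | ζf (hahat X) < ζf α1} ≤ ENNReal.ofReal (exp (-C * s)) := by
  have hκ := minRatio_pos hγ
  have hφ := phi_pos 0
  have hrate : 0 < (1 - c0) / d - 2 := by rw [sub_pos, lt_div_iff₀ hd]; linarith
  refine ⟨2 * d * phi 0 / minRatio γ, by positivity, minRatio γ / 4 * ((1 - c0) / d - 2),
    by positivity, fun n s hs hsn ζf hζ αn hαn hmed hahat hmmle α1 hα1 hα1_eq θ hθ => ?_⟩
  have hs_pos : (0 : ℝ) < s := pos_of_mul_pos_left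
    ((by positivity : 0 < 2 * d * phi 0 / minRatio γ).trans_le hs) (conv_pos hγ _).le
  have hn : 1 ≤ n := by
    by_contra! hn0
    rw [Nat.lt_one_iff.1 hn0, Nat.cast_zero, mul_zero] at hsn
    exact hs_pos.not_ge hsn
  have hle := le_of_medianZero_of_le_mul_conv hγ heven hn hd (Ioc_subset_Icc_self hαn) hα1 hmed
    hα1_eq hs
  rw [ENNReal.le_ofReal_iff_toReal_le (measure_ne_top _ _) (exp_pos _).le]
  exact (measureReal_mono
    (setOf_pseudoThreshold_mmle_lt_subset hγ heven hζ hαn.1 hmmle ⟨hle, hα1.2⟩)).trans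
      (Pdata_real_sum_score_nonneg_le_exp_neg hγ heven hα1 hθ hd hn hsn hα1_eq)

/-- Lemma 6: no undersmoothing.  With `α₁` defined by
`d α₁ m̃(α₁) = s_n/n` for a small enough constant `d > 0`, `ζ` the
pseudo-threshold (`β(ζ(a)) = 1/a`) and `ĥζ = ζ(ĥα)`, under
`c₁ log² n ≤ s_n ≤ c₀ n` one has
`sup_{θ ∈ ℓ₀[s_n]} P_θ[ĥζ < ζ₁] ≤ exp(-C s_n)`. -/
theorem no_undersmoothing :
    ∃ d > (0 : ℝ), ∃ c0 > (0 : ℝ), ∃ c1 > (0 : ℝ), ∃ C > (0 : ℝ), ∃ N0 : ℕ,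
      ∀ n : ℕ, N0 ≤ n → ∀ s : ℕ,
        c1 * (Real.log n) ^ 2 ≤ (s : ℝ) → (s : ℝ) ≤ c0 * n →
        ∀ ζf : ℝ → ℝ,
          (∀ a ∈ Set.Ioc (0 : ℝ) 1, 0 < ζf a ∧ betaFn cauchyDen (ζf a) = 1 / a) →
        ∀ t : ℝ → ℝ, IsThreshold cauchyDen t →
        ∀ αn : ℝ, αn ∈ Set.Ioo (0 : ℝ) 1 → t αn = Real.sqrt (2 * Real.log n) →
        ∀ hahat : (Fin n → ℝ) → ℝ, IsMMLE cauchyDen αn hahat →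
        ∀ α1 : ℝ, α1 ∈ Set.Ioo (0 : ℝ) 1 →
          d * α1 * mtilde cauchyDen α1 = (s : ℝ) / n →
        ∀ θ ∈ ell0 n s,
          Pdata n θ {X : Fin n → ℝ | ζf (hahat X) < ζf α1} ≤
            ENNReal.ofReal (Real.exp (-C * s)) := by
  obtain ⟨c1, hc1, C, hC, hbound⟩ := no_undersmoothing_general isDensity_cauchyDen even_cauchyDen
    (d := 1 / 8) (c0 := 1 / 2) (by norm_num) (by norm_num)
  have hc : 0 < phi 1 / (7 * π) := div_pos (phi_pos 1) (by positivity)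
  refine ⟨1 / 8, by norm_num, 1 / 2, by norm_num, c1 / (phi 1 / (7 * π)), div_pos hc1 hc, C, hC, 3,
    fun n hn s hs hsn ζf hζ t ht αn hαn htn hahat hmmle α1 hα1 => ?_⟩
  have hs' := mul_phi_one_div_le_mul_conv_cauchyDen hn (div_pos hc1 hc).le hs
  rw [div_mul_cancel₀ _ hc.ne'] at hs'
  exact hbound n s hs' hsn ζf hζ αn (Ioo_subset_Ioc_self hαn) (htn ▸ ht.medianZero hαn) hahat
    hmmle α1 (Ioo_subset_Ioc_self hα1)

end
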